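/- arXiv:2009.06117 — 10 statements merged into one kernel-verified Lean document; each statement's English description precedes it below -/
import Mathlib

section
/- Define x_0 = 1 and x_i = p_i/(1 − q'_i) for i ∈ {1,…,n}, and set π_i = x_i / (Σ_{j=0}^n x_j) for each i ∈ {0,1,…,n}. Then π is a stationary distribution of M: π_i ≥ 0 for all i, Σ_{i=0}^n π_i = 1, and Σ_{i=0}^n π_i · M(i,j) = π_j for every j ∈ {0,1,…,n}. -/
/-!
The weights `x` are in detailed balance with `M`: the only edges between distinct states are
`0 → i` and `i → 0`, and `x 0 * p i = p i = x i * (1 - q i)`. With `∑ p i = 1` this makes `x`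
invariant under `M` (`hinv` below). Since every `x i` is positive, so is the total mass, and
dividing by it turns `x` into an invariant probability vector.
-/

open Finset

/-- The stationary distribution of the flower Markov chain with rest state 0:
with x_0 = 1 and x_i = p_i/(1 - q'_i), the vector π_i = x_i / Σ_j x_j is
nonnegative, sums to 1, and satisfies π M = π. -/
theorem flower_stationary_distribution (n : ℕ) (hn : 1 ≤ n)
    (p q : Fin (n + 1) → ℝ)
    (hp : ∀ i, i ≠ 0 → 0 < p i)
    (hpsum : ∑ i ∈ Finset.univ.filter (fun i => i ≠ 0), p i = 1)
    (hq : ∀ i, i ≠ 0 → 0 < q i ∧ q i < 1)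
    (M : Fin (n + 1) → Fin (n + 1) → ℝ)
    (hM : ∀ i j, M i j =
      if i = 0 then (if j = 0 then 0 else p j)
      else if j = i then q i else if j = 0 then 1 - q i else 0)
    (x : Fin (n + 1) → ℝ)
    (hx : ∀ i, x i = if i = 0 then 1 else p i / (1 - q i))
    (π : Fin (n + 1) → ℝ)
    (hπ : ∀ i, π i = x i / ∑ j, x j) :
    (∀ i, 0 ≤ π i) ∧ (∑ i, π i = 1) ∧ (∀ j, ∑ i, π i * M i j = π j) := by
  have hq1 : ∀ i, i ≠ 0 → 0 < 1 - q i := fun i hi => by linarith [(hq i hi).2]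
  have hxpos : ∀ i, 0 < x i := by
    intro i
    rw [hx]
    split_ifs with h
    · exact one_pos
    · exact div_pos (hp i h) (hq1 i h)
  have hS : 0 < ∑ j, x j := Finset.sum_pos (fun i _ => hxpos i) Finset.univ_nonempty
  -- The flow along the edge `i → 0` equals the flow `1 * p i` along `0 → i`.
  have hbal : ∀ i, i ≠ 0 → x i * (1 - q i) = p i := by
    intro i hi
    rw [hx, if_neg hi, div_mul_cancel₀ _ (hq1 i hi).ne']
  have hx0 : x 0 = 1 := by simp [hx]
  have hps : ∑ i : Fin n, p i.succ = 1 := by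
    rw [← hpsum, Finset.sum_filter, Fin.sum_univ_succ]
    simp [Fin.succ_ne_zero]
  have hinv : ∀ j, ∑ i, x i * M i j = x j := by
    intro j
    rw [Fin.sum_univ_succ, hx0, one_mul]
    induction j using Fin.cases with
    | zero =>
      rw [hx0, ← hps, hM, if_pos rfl, if_pos rfl, zero_add]
      refine Finset.sum_congr rfl fun i _ => ?_
      rw [hM, if_neg (Fin.succ_ne_zero i), if_neg (Fin.succ_ne_zero i).symm, if_pos rfl,
        hbal _ (Fin.succ_ne_zero i)]
    | succ k =>
      have hk := Fin.succ_ne_zero k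
      rw [hM, if_pos rfl, if_neg hk, Finset.sum_eq_single k]
      · rw [hM, if_neg hk, if_pos rfl]
        linarith [hbal _ hk]
      · intro i _ hik
        rw [hM, if_neg (Fin.succ_ne_zero i),
          if_neg (fun h => hik (Fin.succ_injective n h).symm), if_neg hk, mul_zero]
      · intro h
        exact absurd (Finset.mem_univ k) h
  refine ⟨fun i => ?_, ?_, fun j => ?_⟩
  · rw [hπ]
    exact (div_pos (hxpos i) hS).le
  · simp_rw [hπ]
    rw [← Finset.sum_div, div_self hS.ne']
  · simp_rw [hπ, div_mul_eq_mul_div]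
    rw [← Finset.sum_div, hinv]
end

section
/- Assume the states are numbered so that φ(1) ≥ φ(2) ≥ … ≥ φ(n). Then for every S ⊆ {1,…,n} there exists m ∈ {0,1,…,n} such that u({1,…,m}) ≥ u(S). In particular, some prefix {1,…,m} (possibly empty) maximizes u over all subsets of {1,…,n}. -/
/-!
Put `t = u S`. Since the denominators are positive, `t ≤ u T` is equivalent to
`t * B - A ≤ ∑ j ∈ T, z j * (φ j - t)`, with equality when `T = S`. The right-hand side is
largest for the threshold set `T = {j | t ≤ φ j}`, which keeps exactly the nonnegative terms;
as `φ` is nonincreasing, this set is a prefix.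
-/

/-- The superlevel sets of a nonincreasing function on `Fin n` are prefixes. -/
theorem exists_prefix_iff (n : ℕ) (φ : Fin n → ℝ)
    (hsorted : ∀ i j : Fin n, i ≤ j → φ j ≤ φ i) (t : ℝ) :
    ∃ m ≤ n, ∀ i : Fin n, (i : ℕ) < m ↔ t ≤ φ i := by
  classical
  -- The least strict upper bound of the indices in the superlevel set.
  have hex : ∃ k : ℕ, ∀ i : Fin n, t ≤ φ i → (i : ℕ) < k := ⟨n, fun i _ => i.2⟩
  refine ⟨Nat.find hex, Nat.find_min' hex fun i _ => i.2, fun i => ⟨fun hi => ?_,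
    Nat.find_spec hex i⟩⟩
  have h := Nat.find_min hex hi
  push Not at h
  obtain ⟨j, hj, hij⟩ := h
  exact hj.trans (hsorted i j hij)

/-- Clearing the positive denominator turns the comparison with `t` into a condition additive
in the states. -/
theorem le_utility_iff {n : ℕ} {A B : ℝ} (hB : 0 < B) {z φ : Fin n → ℝ} (hz : ∀ j, 0 < z j)
    (t : ℝ) (T : Finset (Fin n)) :
    t ≤ (A + ∑ j ∈ T, z j * φ j) / (B + ∑ j ∈ T, z j) ↔
      t * B - A ≤ ∑ j ∈ T, z j * (φ j - t) := by
  have hpos : 0 < B + ∑ j ∈ T, z j :=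
    add_pos_of_pos_of_nonneg hB (Finset.sum_nonneg fun j _ => (hz j).le)
  have hsum : ∑ j ∈ T, z j * (φ j - t) = ∑ j ∈ T, z j * φ j - (∑ j ∈ T, z j) * t := by
    simp only [mul_sub, Finset.sum_sub_distrib, Finset.sum_mul]
  rw [le_div_iff₀ hpos, hsum]
  constructor <;> intro h <;> linarith

/-- If the states are sorted in nonincreasing order of potential φ, then every
subset S is dominated by some prefix {states with index < m}. -/
theorem prefix_dominates (n : ℕ) (hn : 1 ≤ n) (A B : ℝ) (hB : 0 < B)
    (z φ : Fin n → ℝ) (hz : ∀ j, 0 < z j)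
    (hsorted : ∀ i j : Fin n, i ≤ j → φ j ≤ φ i)
    (u : Finset (Fin n) → ℝ)
    (hu : ∀ S, u S = (A + ∑ j ∈ S, z j * φ j) / (B + ∑ j ∈ S, z j))
    (S : Finset (Fin n)) :
    ∃ m ≤ n, u S ≤ u (Finset.univ.filter (fun i : Fin n => (i : ℕ) < m)) := by
  obtain ⟨m, hmn, hm⟩ := exists_prefix_iff n φ hsorted (u S)
  refine ⟨m, hmn, ?_⟩
  have hS := (le_utility_iff hB hz (u S) S).1 (hu S).le
  rw [hu (Finset.univ.filter _), le_utility_iff hB hz]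
  refine hS.trans ?_
  rw [← Finset.sum_filter_add_sum_filter_not S (fun i : Fin n => (i : ℕ) < m)]
  have hneg : ∑ j ∈ S.filter (fun i : Fin n => ¬ (i : ℕ) < m), z j * (φ j - u S) ≤ 0 :=
    Finset.sum_nonpos fun j hj => by
      have := (hm j).not.1 (Finset.mem_filter.1 hj).2
      exact mul_nonpos_of_nonneg_of_nonpos (hz j).le (by linarith)
  have hle : ∑ j ∈ S.filter (fun i : Fin n => (i : ℕ) < m), z j * (φ j - u S) ≤
      ∑ j ∈ Finset.univ.filter (fun i : Fin n => (i : ℕ) < m), z j * (φ j - u S) :=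
    Finset.sum_le_sum_of_subset_of_nonneg (Finset.filter_subset_filter _ (Finset.subset_univ S))
      fun j hj _ => mul_nonneg (hz j).le (sub_nonneg.2 ((hm j).1 (Finset.mem_filter.1 hj).2))
  linarith
end

section
/- Assume the states are numbered so that φ(1) ≥ φ(2) ≥ … ≥ φ(n), and write P_m = {1,…,m} (with P_0 = ∅). Define m* as follows: if φ(k) > u(P_{k−1}) for every k ∈ {1,…,n}, set m* = n; otherwise let m* = k₀ − 1 where k₀ is the least k with φ(k) ≤ u(P_{k−1}). Then u(P_{m*}) ≥ u(S) for every S ⊆ {1,…,n}; i.e., the set produced by the greedy algorithm (which scans states in nonincreasing order of φ and adds state k exactly when φ(k) exceeds the current utility, stopping at the first failure) maximizes the agent's utility over all subsets. -/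
/-! Write `c = u (P m)`. The inequality `u S ≤ c` is equivalent to
`A - c * B + ∑ j ∈ S, z j * (φ j - c) ≤ 0`, and the left side vanishes at `S = P m`, so it is enough
that `P m` maximizes `∑ j ∈ S, z j * (φ j - c)`. This holds because `c` is a threshold:
`c ≤ φ i` for `i < m` and `φ i ≤ c` for `i ≥ m`. The second bound is the stopping condition together
with monotonicity. For the first, the last accepted state has a value `φ` above the utility before
it, and the new utility is a weighted mean of the two, hence at most that value, which in turn is at
most every earlier one. -/

open Finset

/-- Correctness of the greedy algorithm: the prefix P_{m*} chosen by the greedy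
scan (adding state k exactly when φ(k) exceeds the current utility, stopping at
the first failure) maximizes the agent's utility over all subsets. -/
theorem greedy_is_optimal (n : ℕ) (hn : 1 ≤ n) (A B : ℝ) (hB : 0 < B)
    (z φ : Fin n → ℝ) (hz : ∀ j, 0 < z j)
    (hsorted : ∀ i j : Fin n, i ≤ j → φ j ≤ φ i)
    (u : Finset (Fin n) → ℝ)
    (hu : ∀ S, u S = (A + ∑ j ∈ S, z j * φ j) / (B + ∑ j ∈ S, z j))
    (P : ℕ → Finset (Fin n))
    (hP : ∀ m, P m = Finset.univ.filter (fun i : Fin n => (i : ℕ) < m))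
    (m : ℕ)
    (hm : ((∀ i : Fin n, u (P (i : ℕ)) < φ i) ∧ m = n) ∨
          (∃ k : Fin n, ¬ (u (P (k : ℕ)) < φ k) ∧
            (∀ i : Fin n, i < k → u (P (i : ℕ)) < φ i) ∧ m = (k : ℕ))) :
    ∀ S : Finset (Fin n), u S ≤ u (P m) := by
  have hpos : ∀ S : Finset (Fin n), 0 < B + ∑ j ∈ S, z j := fun S =>
    add_pos_of_pos_of_nonneg hB (Finset.sum_nonneg fun j _ => (hz j).le)
  have hle : ∀ (S : Finset (Fin n)) (t : ℝ),
      u S ≤ t ↔ A + ∑ j ∈ S, z j * φ j ≤ t * (B + ∑ j ∈ S, z j) := fun S t => by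
    rw [hu, div_le_iff₀ (hpos S)]
  have hacc : ∀ i : Fin n, (i : ℕ) < m → u (P (i : ℕ)) < φ i := by
    intro i hi
    rcases hm with ⟨h, _⟩ | ⟨k, _, h, hk⟩
    · exact h i
    · exact h i (by rw [Fin.lt_def]; omega)
  have hmn : m ≤ n := by
    rcases hm with ⟨_, h⟩ | ⟨k, _, _, hk⟩
    · exact h.le
    · have := k.isLt
      omega
  have hout : ∀ i : Fin n, m ≤ (i : ℕ) → φ i ≤ u (P m) := by
    intro i hi
    rcases hm with ⟨_, h⟩ | ⟨k, hk, _, hmk⟩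
    · have := i.isLt
      omega
    · rw [hmk] at hi ⊢
      exact (hsorted k i (Fin.le_def.mpr hi)).trans (not_lt.mp hk)
  have hin : ∀ i : Fin n, (i : ℕ) < m → u (P m) ≤ φ i := by
    intro i hi
    -- `p + 1 = m`, so `l = p` is the last accepted state.
    obtain ⟨p, rfl⟩ : ∃ p, m = p + 1 := ⟨m - 1, by omega⟩
    let l : Fin n := ⟨p, by omega⟩
    refine le_trans ?_ (hsorted i l (Fin.le_def.mpr (Nat.lt_succ_iff.mp hi)))
    have hins : P (p + 1) = insert l (P p) := by
      ext j
      simp only [hP, Finset.mem_filter, Finset.mem_univ, true_and, Finset.mem_insert, Fin.ext_iff, l]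
      omega
    have hl : l ∉ P p := by simp [hP, l]
    have h := (hle (P p) (φ l)).mp (hacc l (Nat.lt_succ_self p)).le
    rw [hins, hle, Finset.sum_insert hl, Finset.sum_insert hl]
    linarith [mul_comm (z l) (φ l)]
  intro S
  have hPm : A + ∑ j ∈ P m, z j * φ j = u (P m) * (B + ∑ j ∈ P m, z j) := by
    rw [hu, div_mul_cancel₀ _ (hpos _).ne']
  generalize u (P m) = c at *
  -- Both sums are compared with the sum over `S ∩ P m`.
  have key : ∑ j ∈ S, z j * (φ j - c) ≤ ∑ j ∈ P m, z j * (φ j - c) := by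
    calc ∑ j ∈ S, z j * (φ j - c) ≤ ∑ j ∈ S ∩ P m, z j * (φ j - c) := by
          rw [← Finset.sum_inter_add_sum_sdiff S (P m)]
          refine add_le_of_nonpos_right (Finset.sum_nonpos fun j hj => ?_)
          simp only [hP, Finset.mem_sdiff, Finset.mem_filter, Finset.mem_univ, true_and,
            not_lt] at hj
          exact mul_nonpos_of_nonneg_of_nonpos (hz j).le (sub_nonpos.mpr (hout j hj.2))
      _ ≤ ∑ j ∈ P m, z j * (φ j - c) := by
          refine Finset.sum_le_sum_of_subset_of_nonneg Finset.inter_subset_right fun j hj _ => ?_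
          simp only [hP, Finset.mem_filter, Finset.mem_univ, true_and] at hj
          exact mul_nonneg (hz j).le (sub_nonneg.mpr (hin j hj))
  rw [hle]
  simp only [mul_sub, Finset.sum_sub_distrib, ← Finset.sum_mul] at key
  linarith
end

section
/- If S ⊆ {1,…,n} is feasible (i.e., u(S) ≥ u(S') for every S' ⊆ S), then every subset T ⊆ S is also feasible (i.e., u(T) ≥ u(T') for every T' ⊆ T). -/
/-!
The utility `u S` is the weighted mean of the values `φ j`, `j ∈ S`, and a prior of weight `B`.
Hence dropping a block `D ⊆ X` does not raise `u` exactly when the mean of `φ` over `D` is at least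
`u X` (`sdiff_div_le_iff`). Given `T' ⊆ T ⊆ S`, put `D = T \ T'`. Feasibility of `S` against
`S \ D` says that the mean over `D` is at least `u S`, and feasibility of `S` against `T` says
`u S ≥ u T`. So the mean over `D` is at least `u T`, which means `u T' = u (T \ D) ≤ u T`.
-/

open Finset

/-- Removing a block `D` from `X` does not raise the weighted mean iff the mean of `φ` over `D`
is at least the mean over `X`; this is stated multiplied by the weight of `D`, so that `D = ∅` is
allowed. -/
theorem sdiff_div_le_iff {ι : Type*} [DecidableEq ι] (A B : ℝ) (hB : 0 < B)
    (z φ : ι → ℝ) (hz : ∀ j, 0 < z j) {X D : Finset ι} (hD : D ⊆ X) :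
    (A + ∑ j ∈ X \ D, z j * φ j) / (B + ∑ j ∈ X \ D, z j)
        ≤ (A + ∑ j ∈ X, z j * φ j) / (B + ∑ j ∈ X, z j) ↔
      (A + ∑ j ∈ X, z j * φ j) / (B + ∑ j ∈ X, z j) * ∑ j ∈ D, z j ≤ ∑ j ∈ D, z j * φ j := by
  have pos : ∀ Y : Finset ι, 0 < B + ∑ j ∈ Y, z j := fun Y =>
    add_pos_of_pos_of_nonneg hB (sum_nonneg fun j _ => (hz j).le)
  have hN := sum_sdiff (f := fun j => z j * φ j) hD
  have hM := sum_sdiff (f := z) hD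
  have hX := div_mul_cancel₀ (A + ∑ j ∈ X, z j * φ j) (pos X).ne'
  rw [div_le_iff₀ (pos _)]
  set c := (A + ∑ j ∈ X, z j * φ j) / (B + ∑ j ∈ X, z j)
  rw [← hN, ← hM] at hX
  constructor <;> intro h <;> linarith

/-- Feasibility is hereditary: if the agent offered S adopts all of S
(u(S) ≥ u(S') for all S' ⊆ S), then the same holds for every subset T ⊆ S. -/
theorem feasible_subset (n : ℕ) (hn : 1 ≤ n) (A B : ℝ) (hB : 0 < B)
    (z φ : Fin n → ℝ) (hz : ∀ j, 0 < z j)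
    (u : Finset (Fin n) → ℝ)
    (hu : ∀ S, u S = (A + ∑ j ∈ S, z j * φ j) / (B + ∑ j ∈ S, z j))
    (S : Finset (Fin n)) (hS : ∀ S' ⊆ S, u S' ≤ u S)
    (T : Finset (Fin n)) (hTS : T ⊆ S) :
    ∀ T' ⊆ T, u T' ≤ u T := by
  intro T' hT'
  have key : ∀ {X D : Finset (Fin n)}, D ⊆ X →
      (u (X \ D) ≤ u X ↔ u X * ∑ j ∈ D, z j ≤ ∑ j ∈ D, z j * φ j) := by
    intro X D hD
    simpa only [hu] using sdiff_div_le_iff A B hB z φ hz hD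
  have hDT : T \ T' ⊆ T := sdiff_subset
  have hmean := (key (hDT.trans hTS)).1 (hS _ sdiff_subset)
  have hle : u (T \ (T \ T')) ≤ u T := (key hDT).2 <|
    (mul_le_mul_of_nonneg_right (hS T hTS) (sum_nonneg fun j _ => (hz j).le)).trans hmean
  rwa [Finset.sdiff_sdiff_eq_self hT'] at hle
end

section
/- Let i ∈ {1,…,n} satisfy profit({i}) ≤ 0, i.e., d_i·w_i/(B + z_i) ≤ cost_i. Then for every S ⊆ {1,…,n} with i ∈ S, profit(S) ≤ profit(S ∖ {i}). -/
/-! Adding state `i` to `S \ {i}` only enlarges the denominator, by `z i > 0`, so it cannot raise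
the revenue from the other states. The revenue it brings itself is `d i * w i` over a denominator
at least `B + z i`, hence at most its revenue in `{i}`, which is at most `cost i`. -/

open Finset

/-- If a single state i is unprofitable (profit({i}) ≤ 0, i.e.
d_i·w_i/(B + z_i) ≤ cost_i), then dropping i never decreases the profit:
profit(S) ≤ profit(S \ {i}) for every S containing i. -/
theorem drop_unprofitable_state (n : ℕ) (hn : 1 ≤ n) (B : ℝ) (hB : 0 < B)
    (z w d cost : Fin n → ℝ)
    (hz : ∀ j, 0 < z j) (hw : ∀ j, 0 < w j) (hd : ∀ j, 0 ≤ d j)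
    (profit : Finset (Fin n) → ℝ)
    (hprofit : ∀ S, profit S =
      (∑ j ∈ S, d j * w j) / (B + ∑ j ∈ S, z j) - ∑ j ∈ S, cost j)
    (i : Fin n) (hi : d i * w i / (B + z i) ≤ cost i) :
    ∀ S : Finset (Fin n), i ∈ S → profit S ≤ profit (S.erase i) := by
  intro S hiS
  have hZ : 0 ≤ ∑ j ∈ S.erase i, z j := Finset.sum_nonneg fun j _ => (hz j).le
  have hW : 0 ≤ ∑ j ∈ S.erase i, d j * w j :=
    Finset.sum_nonneg fun j _ => mul_nonneg (hd j) (hw j).le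
  have hzi := hz i
  have hdw : 0 ≤ d i * w i := mul_nonneg (hd i) (hw i).le
  rw [hprofit, hprofit, ← Finset.add_sum_erase S (fun j => d j * w j) hiS,
    ← Finset.add_sum_erase S z hiS, ← Finset.add_sum_erase S cost hiS, add_div]
  have h1 : d i * w i / (B + (z i + ∑ j ∈ S.erase i, z j)) ≤ d i * w i / (B + z i) :=
    div_le_div_of_nonneg_left hdw (by linarith) (by linarith)
  have h2 : (∑ j ∈ S.erase i, d j * w j) / (B + (z i + ∑ j ∈ S.erase i, z j)) ≤
      (∑ j ∈ S.erase i, d j * w j) / (B + ∑ j ∈ S.erase i, z j) :=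
    div_le_div_of_nonneg_left hW (by linarith) (by linarith)
  linarith
end

section
/- Let ε > 0 and K > 0 be reals and let S, S' ⊆ {1,…,n} satisfy D(S) = D(S'), |profit(S) − profit(S')| ≤ εK/(2n), and |P1(S) − P1(S')| ≤ εK/(2n). Then for every T ⊆ {1,…,n} disjoint from S ∪ S', |profit(S ∪ T) − profit(S' ∪ T)| ≤ εK/n. -/
/-! Write `A = D S = D S'` and `E = D (S ∪ T) = D (S' ∪ T)`, so `0 < A ≤ E`. Since `T` is disjoint
from both sets, its contribution to numerators and costs cancels in differences: the difference of
the `P1` values is scaled by `A / E ∈ (0, 1]`, while the cost difference is unchanged. Hence the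
new profit difference is the old one minus `(1 - A / E)` times the old `P1` difference, and the
triangle inequality gives the bound `ε K / (2n) + ε K / (2n)`. -/

open Finset

/-- Quantitative invariance for the FPTAS hash-bin replacement step: if S and S'
agree on D, and their profits and P1 values are within εK/(2n), then for every
extension set T disjoint from S ∪ S', the profits of S ∪ T and S' ∪ T are within
εK/n of each other. -/
theorem fptas_invariance (n : ℕ) (hn : 1 ≤ n) (B : ℝ) (hB : 0 < B)
    (z w d cost : Fin n → ℝ)
    (hz : ∀ j, 0 < z j) (hw : ∀ j, 0 < w j) (hd : ∀ j, 0 ≤ d j)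
    (D P1 profit : Finset (Fin n) → ℝ)
    (hD : ∀ S, D S = B + ∑ j ∈ S, z j)
    (hP1 : ∀ S, P1 S = (∑ j ∈ S, d j * w j) / D S)
    (hprofit : ∀ S, profit S = P1 S - ∑ j ∈ S, cost j)
    (ε K : ℝ) (hε : 0 < ε) (hK : 0 < K)
    (S S' : Finset (Fin n))
    (hDeq : D S = D S')
    (hpr : |profit S - profit S'| ≤ ε * K / (2 * n))
    (hP1d : |P1 S - P1 S'| ≤ ε * K / (2 * n))
    (T : Finset (Fin n)) (hT : Disjoint T (S ∪ S')) :
    |profit (S ∪ T) - profit (S' ∪ T)| ≤ ε * K / n := by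
  obtain ⟨hTS, hTS'⟩ := Finset.disjoint_union_right.mp hT
  have hA : 0 < D S := by
    rw [hD]
    exact add_pos_of_pos_of_nonneg hB (Finset.sum_nonneg fun j _ => (hz j).le)
  have hZ : 0 ≤ ∑ j ∈ T, z j := Finset.sum_nonneg fun j _ => (hz j).le
  have hE : D (S ∪ T) = D S + ∑ j ∈ T, z j := by
    rw [hD, hD, Finset.sum_union hTS.symm, add_assoc]
  have hE' : D (S' ∪ T) = D S + ∑ j ∈ T, z j := by
    rw [hDeq, hD, hD, Finset.sum_union hTS'.symm, add_assoc]
  have hEpos : 0 < D S + ∑ j ∈ T, z j := by linarith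
  have key : profit (S ∪ T) - profit (S' ∪ T) = (profit S - profit S')
      - (∑ j ∈ T, z j) / (D S + ∑ j ∈ T, z j) * (P1 S - P1 S') := by
    simp only [hprofit, hP1]
    rw [hE, hE', ← hDeq, Finset.sum_union hTS.symm, Finset.sum_union hTS'.symm,
      Finset.sum_union hTS.symm, Finset.sum_union hTS'.symm]
    field_simp
    ring
  have hr0 : 0 ≤ (∑ j ∈ T, z j) / (D S + ∑ j ∈ T, z j) := div_nonneg hZ hEpos.le
  have hr1 : (∑ j ∈ T, z j) / (D S + ∑ j ∈ T, z j) ≤ 1 := by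
    rw [div_le_one hEpos]
    linarith
  have hn0 : (n : ℝ) ≠ 0 := by
    have : n ≠ 0 := by omega
    exact_mod_cast this
  rw [key]
  calc _ ≤ |profit S - profit S'|
        + |(∑ j ∈ T, z j) / (D S + ∑ j ∈ T, z j) * (P1 S - P1 S')| := abs_sub _ _
    _ ≤ ε * K / (2 * n) + ε * K / (2 * n) := by
        refine add_le_add hpr ?_
        rw [abs_mul, abs_of_nonneg hr0]
        exact (mul_le_of_le_one_left (abs_nonneg _) hr1).trans hP1d
    _ = ε * K / n := by
        field_simp
        ring
end

section
/- Let Ã ∈ ℝ, B̃ > 0, z > 0, z' > 0 and φ, φ' ∈ ℝ, and set u = (Ã + z·φ)/(B̃ + z) and u' = (Ã + z'·φ')/(B̃ + z'). Then: (1) if z = z', then u < u' if and only if φ < φ'; (2) if z < z', then with ρ = (z'·φ' − z·φ)/(z' − z), exactly one of the following holds: ρ < u' < u, or ρ = u' = u, or ρ > u' > u; (3) if z > z', then exactly one of the following holds: ρ < u < u', or ρ = u = u', or ρ > u > u'. -/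
/-!
Swapping changes the denominator `B + z` into `B + z'` and the numerator by
`z' * φ' - z * φ = ρ * (z' - z)`, so `u' * (B + z') = u * (B + z) + ρ * (z' - z)`. Hence, when
`z < z'`, the new utility `u'` is a weighted average of `u` and `ρ` with positive weights, and lies
strictly between them unless all three coincide; when `z' < z`, the same identity makes `u` a
weighted average of `u'` and `ρ`.
-/

/-- The hypothesis `h` says that `y` is the average of `x` and `r` with positive weights `p` and
`q`; such an average lies strictly between `x` and `r` unless all three are equal. -/
lemma weighted_average_trichotomy {x y r p q : ℝ} (hp : 0 < p) (hq : 0 < q)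
    (h : (y - x) * p = (r - y) * q) :
    (r < y ∧ y < x) ∨ (r = y ∧ y = x) ∨ (x < y ∧ y < r) := by
  rcases lt_trichotomy y x with hyx | rfl | hxy
  · have : (r - y) * q < 0 := h ▸ mul_neg_of_neg_of_pos (sub_neg.2 hyx) hp
    exact Or.inl ⟨sub_neg.1 (neg_of_mul_neg_left this hq.le), hyx⟩
  · have : (r - y) * q = 0 := by rw [← h]; ring
    exact Or.inr (Or.inl ⟨sub_eq_zero.1 ((mul_eq_zero.1 this).resolve_right hq.ne'), rfl⟩)
  · have : 0 < (r - y) * q := h ▸ mul_pos (sub_pos.2 hxy) hp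
    exact Or.inr (Or.inr ⟨hxy, sub_pos.1 (pos_of_mul_pos_left this hq.le)⟩)

/-- The swap lemma for the agent's fractional utility: comparing
u = (Ã + zφ)/(B̃ + z) and u' = (Ã + z'φ')/(B̃ + z') via the swap ratio
ρ = (z'φ' − zφ)/(z' − z). -/
theorem swap_lemma (A B z z' φ φ' u u' ρ : ℝ) (hB : 0 < B)
    (hz : 0 < z) (hz' : 0 < z')
    (hu : u = (A + z * φ) / (B + z))
    (hu' : u' = (A + z' * φ') / (B + z'))
    (hρ : ρ = (z' * φ' - z * φ) / (z' - z)) :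
    (z = z' → (u < u' ↔ φ < φ')) ∧
    (z < z' → ((ρ < u' ∧ u' < u) ∨ (ρ = u' ∧ u' = u) ∨ (u < u' ∧ u' < ρ))) ∧
    (z' < z → ((ρ < u ∧ u < u') ∨ (ρ = u ∧ u = u') ∨ (u' < u ∧ u < ρ))) := by
  have hd : 0 < B + z := by positivity
  have hd' : 0 < B + z' := by positivity
  have key : z' - z ≠ 0 → u' * (B + z') = u * (B + z) + ρ * (z' - z) := by
    intro hne
    rw [hu, hu', hρ, div_mul_cancel₀ _ hd.ne', div_mul_cancel₀ _ hd'.ne', div_mul_cancel₀ _ hne]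
    ring
  refine ⟨?_, fun h => ?_, fun h => ?_⟩
  · rintro rfl
    rw [hu, hu', div_lt_div_iff_of_pos_right hd, add_lt_add_iff_left, mul_lt_mul_iff_right₀ hz]
  · exact weighted_average_trichotomy hd (sub_pos.2 h)
      (by linear_combination key (sub_pos.2 h).ne')
  · exact weighted_average_trichotomy hd' (sub_pos.2 h)
      (by linear_combination -key (sub_neg.2 h).ne)
end

section
/- Let S ⊆ J be feasible. Then S is optimal (u(S) ≥ u(S') for every feasible S' ⊆ J) if and only if both of the following hold: (1) for every j ∈ S, φ(j) ≥ u(S); and (2) for every j' ∈ J ∖ S, either φ(j') ≤ u(S), or there exists j ∈ S with st(j) = st(j') such that u((S ∖ {j}) ∪ {j'}) ≤ u(S). -/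
open Finset

/-!
Put `c = u S` and `g j = z j * (φ j - c)`. Since the denominator `B + ∑ z` is positive, `u T ≤ c`
says `A - c * B + ∑ j ∈ T, g j ≤ 0`, with equality at `T = S`; so `u T ≤ u S` is equivalent to
`∑ j ∈ T, g j ≤ ∑ j ∈ S, g j` (`utility_le_iff`). The fractional problem is thereby replaced by the
additive one of maximizing `∑ g` over feasible sets, which decouples across states.

Necessity of the two conditions follows by comparing `S` with the sets obtained from it by deleting,
inserting or exchanging one platform. For sufficiency, every `t` in a feasible `T` with `g t > 0` is
matched with some `j ∈ S` of the same state and `g t ≤ g j`; the matching is injective because `st`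
is injective on `T`, and the unmatched elements of `S` contribute nonnegatively
(`sum_le_sum_of_dominated`).
-/

lemma utility_le_iff {J : Type*} (A B : ℝ) (hB : 0 < B)
    (z φ : J → ℝ) (hz : ∀ j, 0 < z j) (u : Finset J → ℝ)
    (hu : ∀ S, u S = (A + ∑ j ∈ S, z j * φ j) / (B + ∑ j ∈ S, z j)) (S T : Finset J) :
    u T ≤ u S ↔ ∑ j ∈ T, z j * (φ j - u S) ≤ ∑ j ∈ S, z j * (φ j - u S) := by
  have hpos : ∀ R : Finset J, 0 < B + ∑ j ∈ R, z j := fun R =>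
    add_pos_of_pos_of_nonneg hB (Finset.sum_nonneg fun j _ => (hz j).le)
  have hS : u S * (B + ∑ j ∈ S, z j) = A + ∑ j ∈ S, z j * φ j := by
    rw [hu S, div_mul_cancel₀ _ (hpos S).ne']
  have hsum : ∀ R : Finset J,
      ∑ j ∈ R, z j * (φ j - u S) = ∑ j ∈ R, z j * φ j - u S * ∑ j ∈ R, z j := by
    intro R
    rw [Finset.mul_sum, ← Finset.sum_sub_distrib]
    exact Finset.sum_congr rfl fun j _ => by ring
  rw [hsum, hsum, hu T, div_le_iff₀ (hpos T)]
  constructor <;> intro h <;> linarith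

/-- If every positively weighted element of `T` is dominated by an element of `S` in the same state,
then the total weight of `T` is at most that of `S`. -/
lemma sum_le_sum_of_dominated {J St : Type*} [DecidableEq J] (st : J → St) (g : J → ℝ)
    (S T : Finset J) (hT : Set.InjOn st ↑T) (hS : ∀ j ∈ S, 0 ≤ g j)
    (h : ∀ t ∈ T, 0 < g t → ∃ j ∈ S, st j = st t ∧ g t ≤ g j) :
    ∑ j ∈ T, g j ≤ ∑ j ∈ S, g j := by
  have h' : ∀ t : J, ∃ j, t ∈ T → 0 < g t → j ∈ S ∧ st j = st t ∧ g t ≤ g j := by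
    intro t
    by_cases ht : t ∈ T ∧ 0 < g t
    · obtain ⟨j, hj⟩ := h t ht.1 ht.2
      exact ⟨j, fun _ _ => hj⟩
    · exact ⟨t, fun h1 h2 => absurd ⟨h1, h2⟩ ht⟩
  choose f hf using h'
  have hinj : Set.InjOn f ↑(T.filter fun t => 0 < g t) := by
    intro a ha b hb hab
    simp only [Finset.coe_filter, Set.mem_ofPred_eq] at ha hb
    refine hT ha.1 hb.1 ?_
    rw [← (hf a ha.1 ha.2).2.1, ← (hf b hb.1 hb.2).2.1, hab]
  calc ∑ j ∈ T, g j ≤ ∑ j ∈ T.filter (fun t => 0 < g t), g j := by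
        rw [Finset.sum_filter]
        refine Finset.sum_le_sum fun t _ => ?_
        split_ifs with ht
        · exact le_rfl
        · exact not_lt.mp ht
    _ ≤ ∑ j ∈ T.filter (fun t => 0 < g t), g (f j) := by
        refine Finset.sum_le_sum fun t ht => ?_
        rw [Finset.mem_filter] at ht
        exact (hf t ht.1 ht.2).2.2
    _ = ∑ j ∈ (T.filter fun t => 0 < g t).image f, g j := (Finset.sum_image hinj).symm
    _ ≤ ∑ j ∈ S, g j := by
        refine Finset.sum_le_sum_of_subset_of_nonneg ?_ fun j hj _ => hS j hj
        intro j hj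
        obtain ⟨t, ht, rfl⟩ := Finset.mem_image.mp hj
        rw [Finset.mem_filter] at ht
        exact (hf t ht.1 ht.2).1

/-- Local optimality criterion for the agent's problem with multiple platforms
per state: a feasible set S (at most one platform per state) is optimal iff
every adopted platform has potential ≥ u(S), and every non-adopted platform j'
either has potential ≤ u(S) or swapping it for the adopted platform of its
state does not increase the utility. -/
theorem multi_platform_local_optimality {J St : Type*} [Fintype J] [DecidableEq J]
    (st : J → St) (A B : ℝ) (hB : 0 < B)
    (z φ : J → ℝ) (hz : ∀ j, 0 < z j)
    (u : Finset J → ℝ)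
    (hu : ∀ S, u S = (A + ∑ j ∈ S, z j * φ j) / (B + ∑ j ∈ S, z j))
    (feas : Finset J → Prop)
    (hfeas : ∀ S, feas S ↔ Set.InjOn st ↑S)
    (S : Finset J) (hS : feas S) :
    (∀ S', feas S' → u S' ≤ u S) ↔
      ((∀ j ∈ S, u S ≤ φ j) ∧
        ∀ j' ∉ S, φ j' ≤ u S ∨
          ∃ j ∈ S, st j = st j' ∧ u (insert j' (S.erase j)) ≤ u S) := by
  have key := utility_le_iff A B hB z φ hz u hu S
  rw [hfeas] at hS
  constructor
  · intro hopt
    refine ⟨fun j hj => ?_, fun j' hj' => ?_⟩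
    · have h1 := (key _).mp <| hopt (S.erase j) <| (hfeas _).mpr <|
        hS.mono (Finset.coe_subset.mpr (Finset.erase_subset j S))
      rw [← Finset.add_sum_erase S _ hj] at h1
      have h2 : 0 ≤ z j * (φ j - u S) := by linarith
      linarith [nonneg_of_mul_nonneg_right h2 (hz j)]
    · by_cases hex : ∃ j ∈ S, st j = st j'
      · obtain ⟨j, hj, hst⟩ := hex
        refine Or.inr ⟨j, hj, hst, hopt _ ((hfeas _).mpr ?_)⟩
        rw [Finset.coe_insert, Set.injOn_insert (by simp [hj'])]
        refine ⟨hS.mono (Finset.coe_subset.mpr (Finset.erase_subset j S)), ?_⟩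
        rintro ⟨k, hk, hkst⟩
        rw [Finset.mem_coe, Finset.mem_erase] at hk
        exact hk.1 (hS hk.2 hj (hkst.trans hst.symm))
      · left
        have hf : feas (insert j' S) := by
          rw [hfeas, Finset.coe_insert, Set.injOn_insert (by simpa using hj')]
          exact ⟨hS, fun ⟨k, hk, hkst⟩ => hex ⟨k, hk, hkst⟩⟩
        have h1 := (key _).mp (hopt _ hf)
        rw [Finset.sum_insert hj'] at h1
        by_contra! hlt
        linarith [mul_pos (hz j') (sub_pos.mpr hlt)]
  · rintro ⟨hin, hout⟩ T hT
    rw [key]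
    refine sum_le_sum_of_dominated st _ S T ((hfeas T).mp hT)
      (fun j hj => mul_nonneg (hz j).le (sub_nonneg.mpr (hin j hj))) fun t _ hpos => ?_
    by_cases htS : t ∈ S
    · exact ⟨t, htS, rfl, le_rfl⟩
    · rcases hout t htS with hle | ⟨j, hj, hst, hswap⟩
      · exact absurd hpos (not_lt.mpr
          (mul_nonpos_of_nonneg_of_nonpos (hz t).le (sub_nonpos.mpr hle)))
      · refine ⟨j, hj, hst, ?_⟩
        rw [key, Finset.sum_insert (by simp [htS]), ← Finset.add_sum_erase S _ hj] at hswap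
        linarith
end

section
/- Assume that for every state s ∈ Σ, the platforms of s are enumerated as j^s_1, …, j^s_{k_s} with φ(j^s_1) > φ(j^s_2) > … > φ(j^s_{k_s}), z_{j^s_1} < z_{j^s_2} < … < z_{j^s_{k_s}}, z_{j^s_1}·φ(j^s_1) < … < z_{j^s_{k_s}}·φ(j^s_{k_s}), and slopes ρ(j^s_1, j^s_2) > ρ(j^s_2, j^s_3) > … > ρ(j^s_{k_s−1}, j^s_{k_s}) (the nonredundant platforms form the upper convex Pareto curve). Let S ⊆ J be feasible. Then S is optimal (u(S) ≥ u(S') for every feasible S' ⊆ J) if and only if for every state s one of the following holds: (1) S contains no platform for s, and every platform j for s has φ(j) ≤ u(S); or (2) S contains exactly one platform j = j^s_i for s, and (i) if i > 1 then ρ(j^s_{i−1}, j) ≥ u(S), while if i = 1 then φ(j) ≥ u(S), and (ii) if i < k_s then ρ(j, j^s_{i+1}) ≤ u(S). -/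
/-!
With `v = u S`, clearing the positive denominator `B + ∑ z` turns `u T ≤ u S` into
`∑ j ∈ T, w j ≤ ∑ j ∈ S, w j`, where `w j = z j * (φ j - v)`. This objective is additive, so a
feasible `S` is optimal iff in every state it makes a best choice among the weights `w j` of the
platforms of that state and `0`, the value of adopting none (`forall_sum_le_iff`).

Along one curve the increment of `w` from platform `i` to `i + 1` is the increment of `z` times
`ρ - v`. Since the slopes `ρ` decrease, `w` is unimodal, and a platform is a maximizer iff its
entering slope is at least `v` and its leaving slope at most `v` (`curve_max_iff`). Decreasing
potentials put each slope below the potential of its right endpoint, so an entering slope at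
least `v` already makes the weight nonnegative; at the first platform this is the separate
condition on `φ`.
-/

open Finset

/-- Maximizing an additive weight over sets with at most one element per state decouples into a
separate choice in each state. -/
theorem forall_sum_le_iff {J St : Type*} [DecidableEq J] (st : J → St) (w : J → ℝ)
    (S : Finset J) (hS : Set.InjOn st ↑S) :
    (∀ T : Finset J, Set.InjOn st ↑T → ∑ j ∈ T, w j ≤ ∑ j ∈ S, w j) ↔
      ∀ s : St, ((∀ j ∈ S, st j ≠ s) ∧ ∀ j, st j = s → w j ≤ 0) ∨
        ∃ m ∈ S, st m = s ∧ 0 ≤ w m ∧ ∀ j, st j = s → w j ≤ w m := by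
  classical
  constructor
  · intro h s
    by_cases hs : ∃ m ∈ S, st m = s
    · right
      obtain ⟨m, hm, rfl⟩ := hs
      have herase : w m + ∑ j ∈ S.erase m, w j = ∑ j ∈ S, w j := add_sum_erase S w hm
      have hne : ∀ x ∈ S.erase m, st x ≠ st m := fun x hx hxm =>
        (mem_erase.1 hx).1 (hS (mem_erase.1 hx).2 hm hxm)
      have hinj : Set.InjOn st ↑(S.erase m) :=
        hS.mono (by exact_mod_cast erase_subset m S)
      refine ⟨m, hm, rfl, ?_, fun j hj => ?_⟩
      · linarith [h _ hinj]
      · have hjn : j ∉ S.erase m := fun hx => hne j hx hj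
        have hT : Set.InjOn st ↑(insert j (S.erase m)) := by
          rw [coe_insert, Set.injOn_insert (by exact_mod_cast hjn)]
          refine ⟨hinj, ?_⟩
          rintro ⟨x, hx, hxj⟩
          exact hne x hx (hxj.trans hj)
        have := h _ hT
        rw [sum_insert hjn] at this
        linarith
    · left
      push Not at hs
      refine ⟨hs, fun j hj => ?_⟩
      have hjn : j ∉ S := fun hx => hs j hx hj
      have hT : Set.InjOn st ↑(insert j S) := by
        rw [coe_insert, Set.injOn_insert (by exact_mod_cast hjn)]
        refine ⟨hS, ?_⟩
        rintro ⟨x, hx, hxj⟩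
        exact hs x hx (hxj.trans hj)
      have := h _ hT
      rw [sum_insert hjn] at this
      linarith
  · intro h T hT
    have hS0 : ∀ x ∈ S, 0 ≤ w x := by
      intro x hx
      rcases h (st x) with ⟨h1, -⟩ | ⟨m, hm, hms, h0, -⟩
      · exact absurd rfl (h1 x hx)
      · rwa [← hS hm hx hms]
    -- `g` sends an element of `T` to the element of `S` with the same state, when there is one.
    have hg : ∀ j, ∃ m, (∃ x ∈ S, st x = st j) → m ∈ S ∧ st m = st j ∧ w j ≤ w m := by
      intro j
      rcases h (st j) with ⟨h1, -⟩ | ⟨m, hm, hms, -, h1⟩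
      · exact ⟨j, fun ⟨x, hx, hxj⟩ => absurd hxj (h1 x hx)⟩
      · exact ⟨m, fun _ => ⟨hm, hms, h1 j rfl⟩⟩
    choose g hg using hg
    set T' := T.filter fun j => ∃ x ∈ S, st x = st j with hT'
    have hmem : ∀ j ∈ T', j ∈ T ∧ ∃ x ∈ S, st x = st j := fun j hj => mem_filter.1 hj
    calc ∑ j ∈ T, w j ≤ ∑ j ∈ T', w j := by
          rw [hT', sum_filter]
          refine sum_le_sum fun j _ => ?_
          split_ifs with hj
          · exact le_rfl
          · rcases h (st j) with ⟨-, h1⟩ | ⟨m, hm, hms, -⟩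
            · exact h1 j rfl
            · exact absurd ⟨m, hm, hms⟩ hj
      _ ≤ ∑ j ∈ T', w (g j) := sum_le_sum fun j hj => (hg j (hmem j hj).2).2.2
      _ = ∑ x ∈ T'.image g, w x := by
          refine (sum_image ?_).symm
          intro a ha b hb hab
          have ha := hmem a ha
          have hb := hmem b hb
          refine hT ha.1 hb.1 ?_
          rw [← (hg a ha.2).2.1, ← (hg b hb.2).2.1, hab]
      _ ≤ ∑ x ∈ S, w x := by
          refine sum_le_sum_of_subset_of_nonneg ?_ fun x hx _ => hS0 x hx
          intro x hx
          obtain ⟨j, hj, rfl⟩ := mem_image.1 hx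
          exact (hg j (hmem j hj).2).1

/-- On a concave curve `i ↦ (Z i, Z i * Φ i)` with consecutive slopes `r i`, the tilted height
`Z i * (Φ i - v)` is nonnegative and maximal at `m` iff the slopes next to `m` straddle `v`, with
the condition `v ≤ Φ m` in place of the entering slope when `m = 0`. -/
theorem curve_max_iff (n : ℕ) (Z Φ r : ℕ → ℝ) (v : ℝ)
    (hZ : ∀ i, 0 < Z i)
    (hr : ∀ i, i + 1 < n → Z (i + 1) * Φ (i + 1) - Z i * Φ i = r i * (Z (i + 1) - Z i))
    (hZinc : ∀ i, i + 1 < n → Z i < Z (i + 1))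
    (hΦ : ∀ i, i + 1 < n → Φ (i + 1) < Φ i)
    (hrdec : ∀ i, i + 2 < n → r (i + 1) < r i) (m : ℕ) (hm : m < n) :
    (0 ≤ Z m * (Φ m - v) ∧ ∀ i < n, Z i * (Φ i - v) ≤ Z m * (Φ m - v)) ↔
      (m = 0 → v ≤ Φ m) ∧ (1 ≤ m → v ≤ r (m - 1)) ∧ (m + 1 < n → r m ≤ v) := by
  have hstep : ∀ i, i + 1 < n →
      Z (i + 1) * (Φ (i + 1) - v) - Z i * (Φ i - v) = (r i - v) * (Z (i + 1) - Z i) := by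
    intro i hi
    linear_combination hr i hi
  have hanti : ∀ i l, i ≤ l → l + 1 < n → r l ≤ r i := by
    intro i l hil
    induction l, hil using Nat.le_induction with
    | base => exact fun _ => le_rfl
    | succ l hl ih => exact fun h => (hrdec l h).le.trans (ih (by omega))
  constructor
  · rintro ⟨h0, hmax⟩
    refine ⟨fun _ => ?_, fun h1 => ?_, fun h1 => ?_⟩
    · have := nonneg_of_mul_nonneg_right h0 (hZ m)
      linarith
    · obtain ⟨p, rfl⟩ : ∃ p, m = p + 1 := ⟨m - 1, by omega⟩
      have h2 := hmax p (by omega)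
      have h3 := hstep p hm
      have h4 : 0 ≤ (r p - v) * (Z (p + 1) - Z p) := by linarith
      have := nonneg_of_mul_nonneg_left h4 (sub_pos.2 (hZinc p hm))
      rw [Nat.add_sub_cancel]
      linarith
    · have h2 := hmax (m + 1) h1
      have h3 := hstep m h1
      have h4 : 0 ≤ (v - r m) * (Z (m + 1) - Z m) := by linarith
      have := nonneg_of_mul_nonneg_left h4 (sub_pos.2 (hZinc m h1))
      linarith
  · rintro ⟨h0, h1, h2⟩
    constructor
    · refine mul_nonneg (hZ m).le (sub_nonneg.2 ?_)
      rcases m with _ | p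
      · exact h0 rfl
      · have h3 := h1 (by omega)
        rw [Nat.add_sub_cancel] at h3
        have hd := sub_pos.2 (hZinc p hm)
        have h4 : Z p * Φ (p + 1) < Z p * Φ p := mul_lt_mul_of_pos_left (hΦ p hm) (hZ p)
        -- `Φ p > Φ (p + 1)` forces the slope `r p` below `Φ (p + 1)`.
        have h5 : r p * (Z (p + 1) - Z p) < Φ (p + 1) * (Z (p + 1) - Z p) := by
          rw [← hr p hm]
          linarith
        exact h3.trans (lt_of_mul_lt_mul_right h5 hd.le).le
    · intro i hi
      rcases le_total i m with him | him
      · -- From `i` up to `m` every slope is at least the entering slope at `m`.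
        have key : ∀ l, i ≤ l → l ≤ m → Z i * (Φ i - v) ≤ Z l * (Φ l - v) := by
          intro l hl
          induction l, hl using Nat.le_induction with
          | base => exact fun _ => le_rfl
          | succ l hl ih =>
            intro hlm
            have h3 := h1 (by omega)
            have h4 := hanti l (m - 1) (by omega) (by omega)
            have h5 := hstep l (by omega)
            have h6 := mul_nonneg (sub_nonneg.2 (h3.trans h4))
              (sub_pos.2 (hZinc l (by omega))).le
            linarith [ih (by omega)]
        exact key m him le_rfl
      · -- From `m` up to `i` every slope is at most the leaving slope at `m`.
        have key : ∀ l, m ≤ l → l < n → Z l * (Φ l - v) ≤ Z m * (Φ m - v) := by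
          intro l hl
          induction l, hl using Nat.le_induction with
          | base => exact fun _ => le_rfl
          | succ l hl ih =>
            intro hln
            have h3 := h2 (by omega)
            have h4 := hanti m l hl hln
            have h5 := hstep l hln
            have h6 := mul_nonneg (sub_nonneg.2 (h4.trans h3)) (sub_pos.2 (hZinc l hln)).le
            linarith [ih (by omega)]
        exact key i him hi

/-- Optimality criterion along the convex Pareto curves: assuming for each
state s the platforms of s are enumerated e s 0, …, e s (k s − 1) with strictly
decreasing potentials, strictly increasing z and z·φ, and strictly decreasing
consecutive slopes ρ, a feasible set S is optimal iff for every state s either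
S has no platform for s and all platforms of s have potential ≤ u(S), or S
contains exactly the platform e s i for s, with the entering slope (or the
potential, if i = 0) at least u(S) and the leaving slope (if any) at most u(S). -/
theorem pareto_curve_optimality {J St : Type*} [Fintype J] [DecidableEq J]
    (st : J → St) (A B : ℝ) (hB : 0 < B)
    (z φ : J → ℝ) (hz : ∀ j, 0 < z j)
    (u : Finset J → ℝ)
    (hu : ∀ S, u S = (A + ∑ j ∈ S, z j * φ j) / (B + ∑ j ∈ S, z j))
    (feas : Finset J → Prop)
    (hfeas : ∀ S, feas S ↔ Set.InjOn st ↑S)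
    (ρ : J → J → ℝ)
    (hρ : ∀ j j', ρ j j' = (z j' * φ j' - z j * φ j) / (z j' - z j))
    (k : St → ℕ) (e : St → ℕ → J)
    (hst : ∀ s, ∀ i < k s, st (e s i) = s)
    (hsurj : ∀ j : J, ∃ i < k (st j), e (st j) i = j)
    (hinj : ∀ s, ∀ i < k s, ∀ i' < k s, e s i = e s i' → i = i')
    (hφdec : ∀ s, ∀ i, i + 1 < k s → φ (e s (i + 1)) < φ (e s i))
    (hzinc : ∀ s, ∀ i, i + 1 < k s → z (e s i) < z (e s (i + 1)))
    (hzφinc : ∀ s, ∀ i, i + 1 < k s →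
      z (e s i) * φ (e s i) < z (e s (i + 1)) * φ (e s (i + 1)))
    (hslope : ∀ s, ∀ i, i + 2 < k s →
      ρ (e s (i + 1)) (e s (i + 2)) < ρ (e s i) (e s (i + 1)))
    (S : Finset J) (hS : feas S) :
    (∀ S', feas S' → u S' ≤ u S) ↔
      ∀ s : St,
        ((∀ j ∈ S, st j ≠ s) ∧ (∀ j : J, st j = s → φ j ≤ u S)) ∨
        (∃ i < k s, e s i ∈ S ∧ (∀ j ∈ S, st j = s → j = e s i) ∧
          (i = 0 → u S ≤ φ (e s i)) ∧
          (1 ≤ i → u S ≤ ρ (e s (i - 1)) (e s i)) ∧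
          (i + 1 < k s → ρ (e s i) (e s (i + 1)) ≤ u S)) := by
  have hden : ∀ T : Finset J, 0 < B + ∑ j ∈ T, z j := fun T =>
    add_pos_of_pos_of_nonneg hB (sum_nonneg fun j _ => (hz j).le)
  have hsum : ∀ T : Finset J, ∑ j ∈ T, z j * (φ j - u S) =
      ∑ j ∈ T, z j * φ j - u S * ∑ j ∈ T, z j := by
    intro T
    rw [mul_sum, ← sum_sub_distrib]
    exact sum_congr rfl fun j _ => by ring
  have hSval : u S * (B + ∑ j ∈ S, z j) = A + ∑ j ∈ S, z j * φ j := by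
    conv_lhs => rw [hu S]
    exact div_mul_cancel₀ _ (hden S).ne'
  have hle : ∀ T, u T ≤ u S ↔
      ∑ j ∈ T, z j * (φ j - u S) ≤ ∑ j ∈ S, z j * (φ j - u S) := by
    intro T
    rw [hu T, div_le_iff₀ (hden T), hsum T, hsum S]
    constructor <;> intro h <;> linarith
  simp only [hfeas, hle] at hS ⊢
  rw [forall_sum_le_iff st (fun j => z j * (φ j - u S)) S hS]
  refine forall_congr' fun s => or_congr (and_congr_right fun _ => forall_congr' fun j =>
    imp_congr_right fun _ => ?_) ?_
  · rw [← sub_nonpos (a := φ j)]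
    exact ⟨fun h => nonpos_of_mul_nonpos_right h (hz j), mul_nonpos_of_nonneg_of_nonpos (hz j).le⟩
  · have hcurve := curve_max_iff (k s) (fun i => z (e s i)) (fun i => φ (e s i))
      (fun i => ρ (e s i) (e s (i + 1))) (u S) (fun _ => hz _)
      (fun i hi => by
        rw [hρ, div_mul_cancel₀ _ (sub_pos.2 (hzinc s i hi)).ne'])
      (hzinc s) (hφdec s) (hslope s)
    -- The platforms of `s` are exactly the `e s i` with `i < k s`.
    have hall : ∀ P : J → Prop, (∀ j, st j = s → P j) ↔ ∀ i < k s, P (e s i) := by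
      refine fun P => ⟨fun h i hi => h _ (hst s i hi), ?_⟩
      rintro h j rfl
      obtain ⟨i, hi, hij⟩ := hsurj j
      exact hij ▸ h i hi
    have hpred : ∀ i, 1 ≤ i → e s (i - 1 + 1) = e s i := fun i hi => by
      rw [Nat.sub_add_cancel hi]
    constructor
    · rintro ⟨m, hm, rfl, h0, hmax⟩
      obtain ⟨i, hi, him⟩ := hsurj m
      rw [← him] at h0 hmax hm
      rw [hst _ i hi] at hmax
      obtain ⟨c0, c1, c2⟩ := (hcurve i hi).1 ⟨h0, (hall _).1 hmax⟩
      refine ⟨i, hi, hm, fun j hj hjs => hS hj hm (hjs.trans (hst _ i hi).symm), c0,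
        fun h1 => ?_, c2⟩
      have := c1 h1
      rwa [hpred i h1] at this
    · rintro ⟨i, hi, hiS, -, c0, c1, c2⟩
      obtain ⟨h0, hmax⟩ := (hcurve i hi).2 ⟨c0, fun h1 => by
        rw [hpred i h1]
        exact c1 h1, c2⟩
      exact ⟨e s i, hiS, hst s i hi, h0, (hall _).2 hmax⟩
end

section
/- Let U = {1,…,n} be a set of elements, let S_1,…,S_m ⊆ U be a family of subsets, and let k ≥ 2 be an integer. For a choice (C, g), where C ⊆ {1,…,m} and g is a partial function from {1,…,n} to {1,…,m} with j ∈ S_{g(j)} whenever g(j) is defined, let M(C,g) be the row-stochastic matrix on the state set {e_1,…,e_n} ∪ {f_1,…,f_m} ∪ {bad} given by: row e_j goes to f_{g(j)} with probability 1 if g(j) is defined and to bad with probability 1 otherwise; row f_i for i ∈ C has self-loop probability 1 − 1/k² and probability 1/(n·k²) to each e_j; row f_i for i ∉ C goes to bad with probability 1; row bad has self-loop probability 1 − 1/(n·k⁴) and probability 1/(n²·k⁴) to each e_j. Call a row vector π ≥ 0 with Σ_v π_v = 1 and π·M(C,g) = π a stationary distribution, and define profit(C,g,π) = (k² + k)·Σ_{i∈C}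 π(f_i) − k·|C|. Then there exist (C, g) and a stationary distribution π of M(C,g) with profit(C,g,π) > 0 if and only if there exists C' ⊆ {1,…,m} with |C'| ≤ k and ∪_{i∈C'} S_i = U. -/
/-!
Let `F` be the stationary mass of the set states in `C` and `B` the mass of the bad state.
Stationarity at the element states forces `π(e_j) = F / (n k²) + B / (n² k⁴)` for every `j`.

If some element is not sent by `g` into `C`, all of its mass reaches the bad state in at most two
steps, so the outflow `B / (n k⁴)` of the bad state is at least `F / (n k²)`. Hence `B ≥ k² F`,
`F ≤ 1 / (k² + 1)`, and a nonempty `C` cannot pay for itself. A positive profit also gives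
`|C| < (k + 1) F ≤ k + 1`, so `C` is itself a cover with at most `k` members
(`card_le_and_cover`).

Conversely, for a cover `C` with a choice `h j ∈ C` of a set for each element, the bad state can be
left with no mass, each element state has mass `1 / (n (k² + 1))`, and `f_i` has mass `k²` times
that of the elements sent to it. Then `F = k² / (k² + 1)` and the profit is at least
`k² (k - 1) / (k² + 1) > 0` (`coverDist_stationary`, `coverDist_sum_sets`).
-/

open Finset

/-- The transition matrix of the Markov chain arising in the Set Cover
reduction: element states `Sum.inl j`, set states `Sum.inr (Sum.inl i)`, and
a bad state `Sum.inr (Sum.inr ())`. -/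
noncomputable def setCoverChain (n m k : ℕ) (C : Finset (Fin m))
    (g : Fin n → Option (Fin m)) :
    (Fin n ⊕ Fin m ⊕ Unit) → (Fin n ⊕ Fin m ⊕ Unit) → ℝ :=
  fun v w =>
    match v with
    | Sum.inl j =>
      match g j with
      | some i => if w = Sum.inr (Sum.inl i) then 1 else 0
      | none => if w = Sum.inr (Sum.inr ()) then 1 else 0
    | Sum.inr (Sum.inl i) =>
      if i ∈ C then
        match w with
        | Sum.inl _ => 1 / ((n : ℝ) * (k : ℝ) ^ 2)
        | Sum.inr (Sum.inl i') => if i' = i then 1 - 1 / (k : ℝ) ^ 2 else 0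
        | Sum.inr (Sum.inr _) => 0
      else if w = Sum.inr (Sum.inr ()) then 1 else 0
    | Sum.inr (Sum.inr _) =>
      match w with
      | Sum.inl _ => 1 / ((n : ℝ) ^ 2 * (k : ℝ) ^ 4)
      | Sum.inr (Sum.inl _) => 0
      | Sum.inr (Sum.inr _) => 1 - 1 / ((n : ℝ) * (k : ℝ) ^ 4)

/-- Balance at the element state `e_j`, whose inflow comes only from the set states in `C` and
from the bad state. -/
lemma balance_elem {n m k : ℕ} {C : Finset (Fin m)} {g : Fin n → Option (Fin m)}
    {π : (Fin n ⊕ Fin m ⊕ Unit) → ℝ}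
    (hst : ∀ w, ∑ v, π v * setCoverChain n m k C g v w = π w) (j : Fin n) :
    π (Sum.inl j) = (∑ i ∈ C, π (Sum.inr (Sum.inl i))) * (1 / ((n : ℝ) * (k : ℝ) ^ 2))
      + π (Sum.inr (Sum.inr ())) * (1 / ((n : ℝ) ^ 2 * (k : ℝ) ^ 4)) := by
  rw [← hst (Sum.inl j), Fintype.sum_sum_type, Fintype.sum_sum_type]
  have h1 : ∑ a, π (Sum.inl a) * setCoverChain n m k C g (Sum.inl a) (Sum.inl j) = 0 := by
    refine Finset.sum_eq_zero fun a _ => ?_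
    cases hga : g a <;> simp [setCoverChain, hga]
  rw [h1, Finset.sum_mul]
  simp [setCoverChain, Finset.sum_ite_mem]

/-- If `j` is not sent into `C`, the outflow of the bad state is at least the mass of `e_j`. -/
lemma elem_le_outflow {n m k : ℕ} {C : Finset (Fin m)} {g : Fin n → Option (Fin m)}
    {π : (Fin n ⊕ Fin m ⊕ Unit) → ℝ} (hpos : ∀ v, 0 ≤ π v)
    (hst : ∀ w, ∑ v, π v * setCoverChain n m k C g v w = π w) {j : Fin n}
    (hj : ∀ i ∈ C, g j ≠ some i) :
    π (Sum.inl j) ≤ π (Sum.inr (Sum.inr ())) * (1 / ((n : ℝ) * (k : ℝ) ^ 4)) := by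
  have hbad := hst (Sum.inr (Sum.inr ()))
  rw [Fintype.sum_sum_type, Fintype.sum_sum_type] at hbad
  have hU : ∑ u, π (Sum.inr (Sum.inr u)) *
      setCoverChain n m k C g (Sum.inr (Sum.inr u)) (Sum.inr (Sum.inr ()))
      = π (Sum.inr (Sum.inr ())) * (1 - 1 / ((n : ℝ) * (k : ℝ) ^ 4)) := by
    simp [setCoverChain]
  rw [hU] at hbad
  have hE : ∀ a ∈ (univ : Finset (Fin n)), 0 ≤ π (Sum.inl a) *
      setCoverChain n m k C g (Sum.inl a) (Sum.inr (Sum.inr ())) := by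
    intro a _
    refine mul_nonneg (hpos _) ?_
    cases hga : g a <;> simp [setCoverChain, hga]
  have hF : ∀ i ∈ (univ : Finset (Fin m)), 0 ≤ π (Sum.inr (Sum.inl i)) *
      setCoverChain n m k C g (Sum.inr (Sum.inl i)) (Sum.inr (Sum.inr ())) := by
    intro i _
    refine mul_nonneg (hpos _) ?_
    simp only [setCoverChain]
    split_ifs <;> simp
  have hE0 := Finset.sum_nonneg hE
  have hF0 := Finset.sum_nonneg hF
  cases hg : g j with
  | none =>
    have h := Finset.single_le_sum hE (mem_univ j)
    simp only [setCoverChain, hg, if_true, mul_one] at h hbad hE0 hF0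
    linarith
  | some i =>
    have hi : i ∉ C := fun h => hj i h hg
    have h := Finset.single_le_sum hF (mem_univ i)
    -- `f_i` receives all the mass of `e_j` and passes all of its own on to the bad state.
    have hfi : π (Sum.inl j) ≤ π (Sum.inr (Sum.inl i)) := by
      have hw := hst (Sum.inr (Sum.inl i))
      have hnn : ∀ v ∈ (univ : Finset (Fin n ⊕ Fin m ⊕ Unit)), 0 ≤ π v *
          setCoverChain n m k C g v (Sum.inr (Sum.inl i)) := by
        rintro (a | a | a) _
        · refine mul_nonneg (hpos _) ?_
          simp only [setCoverChain]
          split <;> split_ifs <;> simp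
        · refine mul_nonneg (hpos _) ?_
          simp only [setCoverChain]
          by_cases haC : a ∈ C
          · have hne : i ≠ a := fun h => hi (h ▸ haC)
            simp [haC, hne]
          · simp [haC]
        · simp [setCoverChain]
      have h2 := Finset.single_le_sum hnn (mem_univ (Sum.inl j))
      rw [hw] at h2
      simpa [setCoverChain, hg] using h2
    simp only [setCoverChain, hi, if_false, if_true, mul_one] at h hbad hE0 hF0
    linarith

lemma card_le_and_cover {n m k : ℕ} (hn : 1 ≤ n) (hk : 2 ≤ k) {C : Finset (Fin m)}
    {g : Fin n → Option (Fin m)} {π : (Fin n ⊕ Fin m ⊕ Unit) → ℝ}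
    (hpos : ∀ v, 0 ≤ π v) (hsum : ∑ v, π v = 1)
    (hst : ∀ w, ∑ v, π v * setCoverChain n m k C g v w = π w)
    (hprofit : 0 < ((k : ℝ) ^ 2 + k) * (∑ i ∈ C, π (Sum.inr (Sum.inl i))) - (k : ℝ) * C.card) :
    C.card ≤ k ∧ ∀ j, ∃ i ∈ C, g j = some i := by
  have hn' : (0 : ℝ) < n := by exact_mod_cast hn
  have hk' : (2 : ℝ) ≤ k := by exact_mod_cast hk
  have hk0 : (0 : ℝ) < k := by linarith
  have hFB : ∑ i ∈ C, π (Sum.inr (Sum.inl i)) + π (Sum.inr (Sum.inr ())) ≤ 1 := by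
    rw [Fintype.sum_sum_type, Fintype.sum_sum_type] at hsum
    have h1 : 0 ≤ ∑ a, π (Sum.inl a) := Finset.sum_nonneg fun _ _ => hpos _
    have h2 : ∑ i ∈ C, π (Sum.inr (Sum.inl i)) ≤ ∑ i, π (Sum.inr (Sum.inl i)) :=
      Finset.sum_le_sum_of_subset_of_nonneg (subset_univ _) fun _ _ _ => hpos _
    simp only [univ_unique, sum_singleton, PUnit.default_eq_unit] at hsum
    linarith
  have hB := hpos (Sum.inr (Sum.inr ()))
  have hbal := balance_elem hst
  have hout := fun j => elem_le_outflow (j := j) hpos hst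
  have hC0 : C = ∅ → False := by
    rintro rfl
    simp at hprofit
  set F := ∑ i ∈ C, π (Sum.inr (Sum.inl i)) with hF
  set B := π (Sum.inr (Sum.inr ()))
  have hgain : (C.card : ℝ) < (k + 1) * F := by
    have : 0 < (k : ℝ) * ((k + 1) * F - C.card) := by linarith
    linarith [pos_of_mul_pos_right this hk0.le]
  constructor
  · have : (C.card : ℝ) < k + 1 := by nlinarith
    exact Nat.lt_succ_iff.mp (by exact_mod_cast this)
  · by_contra! hcon
    obtain ⟨j, hj⟩ := hcon
    have h := hout j hj
    rw [hbal j] at h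
    have hB' : 0 ≤ B * (1 / ((n : ℝ) ^ 2 * (k : ℝ) ^ 4)) := by positivity
    have h3 : F * (1 / ((n : ℝ) * (k : ℝ) ^ 2)) ≤ B * (1 / ((n : ℝ) * (k : ℝ) ^ 4)) := by
      linarith
    have h4 : (k : ℝ) ^ 2 * F ≤ B := by
      have h5 := mul_le_mul_of_nonneg_right h3 (by positivity : 0 ≤ (n : ℝ) * (k : ℝ) ^ 4)
      field_simp at h5
      linarith
    have hcard : (1 : ℝ) ≤ C.card := by
      exact_mod_cast Finset.card_pos.mpr (Finset.nonempty_iff_ne_empty.mpr hC0)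
    -- `(k² + 1) F ≤ 1` while `(k + 1) F > 1`, and `k² ≥ k`.
    have hFpos : 0 < F := by
      have : 0 < (k + 1) * F := by linarith
      exact pos_of_mul_pos_right this (by linarith)
    nlinarith [mul_nonneg (mul_nonneg hk0.le hFpos.le) (by linarith : (0 : ℝ) ≤ k - 1)]

/-- The stationary distribution of the chain in which the element `j` is sent to the set `h j`:
the bad state has no mass, each `e_j` has mass `1 / (n (k² + 1))`, and `f_i` has `k²` times the
mass of the elements sent to it. -/
noncomputable def coverDist (n m k : ℕ) (h : Fin n → Fin m) : (Fin n ⊕ Fin m ⊕ Unit) → ℝ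
  | Sum.inl _ => 1 / ((n : ℝ) * ((k : ℝ) ^ 2 + 1))
  | Sum.inr (Sum.inl i) =>
    ∑ j : Fin n, if h j = i then (k : ℝ) ^ 2 / ((n : ℝ) * ((k : ℝ) ^ 2 + 1)) else 0
  | Sum.inr (Sum.inr _) => 0

lemma coverDist_nonneg (n m k : ℕ) (h : Fin n → Fin m) (v : Fin n ⊕ Fin m ⊕ Unit) :
    0 ≤ coverDist n m k h v := by
  rcases v with a | a | a
  · simp only [coverDist]; positivity
  · simp only [coverDist]
    refine Finset.sum_nonneg fun j _ => ?_
    split_ifs <;> positivity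
  · simp [coverDist]

lemma coverDist_sum_sets {n m k : ℕ} (hn : 1 ≤ n) {h : Fin n → Fin m} {C : Finset (Fin m)}
    (hC : ∀ j, h j ∈ C) :
    ∑ i ∈ C, coverDist n m k h (Sum.inr (Sum.inl i)) = (k : ℝ) ^ 2 / ((k : ℝ) ^ 2 + 1) := by
  have hn' : (0 : ℝ) < n := by exact_mod_cast hn
  have hk' : (0 : ℝ) < (k : ℝ) ^ 2 + 1 := by positivity
  simp only [coverDist]
  rw [Finset.sum_comm]
  simp only [Finset.sum_ite_eq, hC, if_true, sum_const, card_univ, Fintype.card_fin, nsmul_eq_mul]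
  field_simp

lemma coverDist_sum {n m k : ℕ} (hn : 1 ≤ n) (h : Fin n → Fin m) :
    ∑ v, coverDist n m k h v = 1 := by
  have hn' : (0 : ℝ) < n := by exact_mod_cast hn
  have hk' : (0 : ℝ) < (k : ℝ) ^ 2 + 1 := by positivity
  rw [Fintype.sum_sum_type, Fintype.sum_sum_type, coverDist_sum_sets hn fun j => mem_univ (h j)]
  simp only [coverDist, sum_const, card_univ, Fintype.card_fin, nsmul_eq_mul, mul_zero, add_zero]
  field_simp
  ring

lemma coverDist_stationary {n m k : ℕ} (hn : 1 ≤ n) (hk : 2 ≤ k) {h : Fin n → Fin m}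
    {C : Finset (Fin m)} (hC : ∀ j, h j ∈ C) (w : Fin n ⊕ Fin m ⊕ Unit) :
    ∑ v, coverDist n m k h v * setCoverChain n m k C (fun j => some (h j)) v w
      = coverDist n m k h w := by
  have hn' : (0 : ℝ) < n := by exact_mod_cast hn
  have hk0 : (0 : ℝ) < k := by exact_mod_cast (by omega : 0 < k)
  have hk' : (0 : ℝ) < (k : ℝ) ^ 2 + 1 := by positivity
  have hout : ∀ i, i ∉ C → coverDist n m k h (Sum.inr (Sum.inl i)) = 0 := by
    intro i hi
    simp only [coverDist]
    refine Finset.sum_eq_zero fun j _ => if_neg ?_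
    rintro rfl
    exact hi (hC j)
  have hbad : ∀ u, coverDist n m k h (Sum.inr (Sum.inr u)) = 0 := fun _ => rfl
  rw [Fintype.sum_sum_type, Fintype.sum_sum_type]
  simp only [hbad, zero_mul, sum_const_zero, add_zero]
  rcases w with j | i | u
  · have h1 : ∀ i, coverDist n m k h (Sum.inr (Sum.inl i)) *
        setCoverChain n m k C (fun j => some (h j)) (Sum.inr (Sum.inl i)) (Sum.inl j)
        = coverDist n m k h (Sum.inr (Sum.inl i)) * (1 / ((n : ℝ) * (k : ℝ) ^ 2)) := by
      intro i
      by_cases hi : i ∈ C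
      · simp [setCoverChain, hi]
      · simp [hout i hi]
    simp only [h1]
    rw [← Finset.sum_mul, coverDist_sum_sets hn fun j => mem_univ (h j)]
    simp only [setCoverChain, coverDist, reduceCtorEq, if_false, mul_zero, sum_const_zero, zero_add]
    field_simp
  · have h1 : ∀ a, coverDist n m k h (Sum.inr (Sum.inl a)) *
        setCoverChain n m k C (fun j => some (h j)) (Sum.inr (Sum.inl a)) (Sum.inr (Sum.inl i))
        = if i = a then coverDist n m k h (Sum.inr (Sum.inl i)) * (1 - 1 / (k : ℝ) ^ 2) else 0 := by
      intro a
      by_cases ha : a ∈ C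
      · by_cases hia : i = a
        · subst hia; simp [setCoverChain, ha]
        · simp [setCoverChain, ha, hia]
      · rw [hout a ha]
        split_ifs with hia
        · subst hia; simp [hout i ha]
        · simp
    have h2 : ∑ j, coverDist n m k h (Sum.inl j) *
        setCoverChain n m k C (fun j => some (h j)) (Sum.inl j) (Sum.inr (Sum.inl i))
        = coverDist n m k h (Sum.inr (Sum.inl i)) * (1 / (k : ℝ) ^ 2) := by
      simp only [coverDist, Finset.sum_mul]
      refine Finset.sum_congr rfl fun j _ => ?_
      by_cases hji : h j = i
      · simp only [setCoverChain, hji, if_true]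
        field_simp
      · have hji' : i ≠ h j := fun e => hji e.symm
        simp [setCoverChain, hji, hji']
    rw [h2]
    simp only [h1, Finset.sum_ite_eq, mem_univ, if_true]
    ring
  · have h1 : ∀ i, coverDist n m k h (Sum.inr (Sum.inl i)) *
        setCoverChain n m k C (fun j => some (h j)) (Sum.inr (Sum.inl i)) (Sum.inr (Sum.inr u))
        = 0 := by
      intro i
      by_cases hi : i ∈ C
      · simp [setCoverChain, hi]
      · simp [hout i hi]
    simp only [h1]
    simp [setCoverChain, coverDist]

/-- Correctness of the Set Cover reduction for the general platform design
problem: there is a designer choice (C, g) whose induced Markov chain admits a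
stationary distribution with positive designer profit
(k²+k)·Σ_{i∈C} π(f_i) − k·|C| iff the Set Cover instance has a cover of size
at most k. -/
theorem set_cover_reduction (n m k : ℕ) (hn : 1 ≤ n) (hm : 1 ≤ m) (hk : 2 ≤ k)
    (S : Fin m → Finset (Fin n)) :
    (∃ (C : Finset (Fin m)) (g : Fin n → Option (Fin m)),
      (∀ j i, g j = some i → j ∈ S i) ∧
      ∃ π : (Fin n ⊕ Fin m ⊕ Unit) → ℝ,
        (∀ v, 0 ≤ π v) ∧ (∑ v, π v = 1) ∧
        (∀ w, ∑ v, π v * setCoverChain n m k C g v w = π w) ∧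
        0 < ((k : ℝ) ^ 2 + k) * (∑ i ∈ C, π (Sum.inr (Sum.inl i)))
          - (k : ℝ) * C.card) ↔
    (∃ C' : Finset (Fin m), C'.card ≤ k ∧ ∀ j : Fin n, ∃ i ∈ C', j ∈ S i) := by
  constructor
  · rintro ⟨C, g, hg, π, hpos, hsum, hst, hprofit⟩
    obtain ⟨hcard, hcov⟩ := card_le_and_cover hn hk hpos hsum hst hprofit
    refine ⟨C, hcard, fun j => ?_⟩
    obtain ⟨i, hi, hji⟩ := hcov j
    exact ⟨i, hi, hg j i hji⟩
  · rintro ⟨C, hcard, hcov⟩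
    choose h hC hS using hcov
    refine ⟨C, fun j => some (h j), ?_, coverDist n m k h, coverDist_nonneg n m k h,
      coverDist_sum hn h, coverDist_stationary hn hk hC, ?_⟩
    · intro j i hji
      obtain rfl := Option.some.inj hji
      exact hS j
    · rw [coverDist_sum_sets hn hC]
      have hk2 : (2 : ℝ) ≤ k := by exact_mod_cast hk
      have hc : (C.card : ℝ) ≤ k := by exact_mod_cast hcard
      have h1 : (k : ℝ) * C.card ≤ k * k := by gcongr
      have h2 : ((k : ℝ) ^ 2 + k) * ((k : ℝ) ^ 2 / ((k : ℝ) ^ 2 + 1)) - k * k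
          = (k : ℝ) ^ 2 * (k - 1) / ((k : ℝ) ^ 2 + 1) := by
        field_simp
        ring
      have h3 : 0 < (k : ℝ) ^ 2 * (k - 1) / ((k : ℝ) ^ 2 + 1) := by
        have : (0 : ℝ) < k - 1 := by linarith
        positivity
      linarith
end
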